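/- Let n and k be positive integers with i·n = 7k for some i ∈ {1,2,3} and 2k < n, and suppose that either n ≥ 42 or (n,k) ∈ {(28,8),(35,10),(35,15)}. Then for every inner vertex b_j of GP(n,k), there are exactly 18 vertices at graph distance exactly 4 from b_j; moreover the only coincidences among endpoints of the shortest paths of length 4 from b_j through distinct neighbours are the four pairs given by the vertices b_{j-k-1}, b_{j-k+1}, b_{j+k-1} and b_{j+k+1}, each of which is reached through two distinct neighbours of b_j. -/

import Mathlib

open SimpleGraph

/-- Vertices of the generalised Petersen graph: `Sum.inl j` is the outer vertex `a_j`,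
`Sum.inr j` is the inner vertex `b_j`. -/
abbrev GPVertex (n : ℕ) := ZMod n ⊕ ZMod n

/-- The defining relation of the edges of `GP(n,k)`. -/
def GPRel (n k : ℕ) : GPVertex n → GPVertex n → Prop
  | Sum.inl i, Sum.inl j => j = i + 1
  | Sum.inl i, Sum.inr j => j = i
  | Sum.inr i, Sum.inr j => j = i + (k : ZMod n)
  | _, _ => False

/-- The generalised Petersen graph `GP(n,k)`. -/
def GP (n k : ℕ) : SimpleGraph (GPVertex n) := SimpleGraph.fromRel (GPRel n k)

/-- The four inner vertices at distance `4` from `b_j` that are each reached via two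
distinct neighbours of `b_j`. -/
def innerDoubled (n k : ℕ) (j : ZMod n) : Set (GPVertex n) :=
  {Sum.inr (j - (k : ZMod n) - 1), Sum.inr (j - (k : ZMod n) + 1),
   Sum.inr (j + (k : ZMod n) - 1), Sum.inr (j + (k : ZMod n) + 1)}

/-!
`GP(n,k)` is the quotient of a grid-like graph on two copies of `ℤ × ℤ`, in which `(a, b)` stands
for the subscript `j + a k + b`, by the lattice of relations `a k + b = 0` in `ℤ/nℤ`. Distances in
the cover are explicit, and distances in `GP(n,k)` are their minima over the fibres. For the
admissible parameters `(7, 0)` is a relation and no nonzero relation has `ℓ¹` norm below `7`.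
Hence the sphere of radius `4` around `b_j` is that of the cover, namely the outer vertices with
`|a| + |b| = 3` and the inner ones with `|a| + |b| = 2`, `b ≠ 0`, except that the inner vertices
`(±4, 0)` of the cover fold back to `(∓3, 0)`. A geodesic from `b_j` to such a vertex projects
from a geodesic of the cover ending at `(a, b)`; its first step follows the sign of `a`, or is the
spoke, and both occur only for inner vertices with `a, b ≠ 0`, that is for `(±1, ±1)`.
-/

namespace GP

theorem edist_add_zsmul_le {A V : Type*} [AddCommGroup A] {G : SimpleGraph V} {f : A → V} {c : A}
    (hf : ∀ x, G.edist (f x) (f (x + c)) ≤ 1) (x : A) (z : ℤ) :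
    G.edist (f x) (f (x + z • c)) ≤ z.natAbs := by
  have edist_add_nsmul_le (x : A) (m : ℕ) : G.edist (f x) (f (x + m • c)) ≤ m := by
    induction m with
    | zero => simp
    | succ m ih =>
      rw [succ_nsmul, ← add_assoc, Nat.cast_succ]
      exact G.edist_triangle.trans (add_le_add ih (hf _))
  obtain ⟨m, rfl | rfl⟩ := z.eq_nat_or_neg
  · simpa using edist_add_nsmul_le x m
  · simpa [SimpleGraph.edist_comm, ← sub_eq_add_neg] using edist_add_nsmul_le (x - m • c) m

/-! ### Distances in terms of integer displacements -/

/-- The displacement `(a, b)` moves a subscript by `a * k + b`. -/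
def disp (n k : ℕ) : ℤ × ℤ →+ ZMod n :=
  (zmultiplesHom _ (k : ZMod n)).coprod (zmultiplesHom _ 1)

@[simp]
theorem disp_apply (n k : ℕ) (p : ℤ × ℤ) : disp n k p = p.1 * k + p.2 := by
  simp [disp]

/-- The `ℓ¹` norm on `ℤ × ℤ`. -/
def l1Norm (p : ℤ × ℤ) : ℕ := p.1.natAbs + p.2.natAbs

variable {n k : ℕ}

/-- `p` is a displacement from the subscript of `u` to the subscript of `w`. -/
def IsDisp (k : ℕ) (u w : GPVertex n) (p : ℤ × ℤ) : Prop :=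
  Sum.elim id id w = Sum.elim id id u + disp n k p

/-- The number of edges needed to go from `u` to `w` with total displacement `p`: only inner
edges change the first coordinate of the displacement, only outer edges the second, and each
change of rim costs a spoke. -/
def cost : GPVertex n → GPVertex n → ℤ × ℤ → ℕ
  | Sum.inl _, Sum.inl _, p => if p.1 = 0 then p.2.natAbs else l1Norm p + 2
  | Sum.inr _, Sum.inr _, p => if p.2 = 0 then p.1.natAbs else l1Norm p + 2
  | _, _, p => l1Norm p + 1

theorem IsDisp.add {u v w : GPVertex n} {p q : ℤ × ℤ} (hp : IsDisp k u v p)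
    (hq : IsDisp k v w q) : IsDisp k u w (p + q) := by
  rw [IsDisp] at *
  rw [hq, hp, map_add, add_assoc]

theorem IsDisp.sub {u v w : GPVertex n} {p q : ℤ × ℤ} (hp : IsDisp k u w p)
    (hq : IsDisp k u v q) : IsDisp k v w (p - q) := by
  rw [IsDisp] at *
  rw [hp, hq, map_sub]
  abel

theorem exists_isDisp (k : ℕ) (u w : GPVertex n) : ∃ p, IsDisp k u w p := by
  obtain ⟨b, hb⟩ := ZMod.intCast_surjective (Sum.elim id id w - Sum.elim id id u)
  exact ⟨(0, b), by simp [IsDisp, hb]⟩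

theorem cost_self (u : GPVertex n) : cost u u 0 = 0 := by
  rcases u with x | x <;> rfl

theorem cost_add_le (u v w : GPVertex n) (p q : ℤ × ℤ) :
    cost u w (p + q) ≤ cost u v p + cost v w q := by
  rcases u with u | u <;> rcases v with v | v <;> rcases w with w | w <;>
    simp only [cost, l1Norm, Prod.fst_add, Prod.snd_add] <;> split_ifs <;> omega

theorem l1Norm_le_cost (u w : GPVertex n) (p : ℤ × ℤ) : l1Norm p ≤ cost u w p := by
  rcases u with u | u <;> rcases w with w | w <;> simp only [cost, l1Norm] <;> grind

theorem exists_isDisp_cost_eq_one_of_adj {u v : GPVertex n} (h : (GP n k).Adj u v) :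
    ∃ s, IsDisp k u v s ∧ cost u v s = 1 := by
  obtain ⟨-, h | h⟩ := (SimpleGraph.fromRel_adj _ _ _).1 h <;>
    rcases u with x | x <;> rcases v with y | y <;> simp only [GPRel] at h
  · exact ⟨(0, 1), by simp [IsDisp, h], rfl⟩
  · exact ⟨0, by simp [IsDisp, h], rfl⟩
  · exact ⟨(1, 0), by simp [IsDisp, h], rfl⟩
  · exact ⟨(0, -1), by simp [IsDisp, h], rfl⟩
  · exact ⟨0, by simp [IsDisp, h], rfl⟩
  · exact ⟨(-1, 0), by simp [IsDisp, h], rfl⟩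

theorem exists_isDisp_cost_le_length {u w : GPVertex n} (q : (GP n k).Walk u w) :
    ∃ p, IsDisp k u w p ∧ cost u w p ≤ q.length := by
  induction q with
  | nil => exact ⟨0, by simp [IsDisp], (cost_self _).le⟩
  | @cons u v w hadj q ih =>
    obtain ⟨p, hp, hpq⟩ := ih
    obtain ⟨s, hs, hs1⟩ := exists_isDisp_cost_eq_one_of_adj hadj
    refine ⟨s + p, hs.add hp, (cost_add_le u v w s p).trans ?_⟩
    rw [SimpleGraph.Walk.length_cons]
    omega

theorem edist_outer_le (k : ℕ) (x : ZMod n) (b : ℤ) :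
    (GP n k).edist (Sum.inl x) (Sum.inl (x + b)) ≤ b.natAbs := by
  rw [← zsmul_one]
  refine edist_add_zsmul_le (fun x => ?_) x b
  simp [SimpleGraph.edist_le_one_iff_adj_or_eq, GP, GPRel, or_iff_not_imp_right]

theorem edist_inner_le (k : ℕ) (x : ZMod n) (a : ℤ) :
    (GP n k).edist (Sum.inr x) (Sum.inr (x + a * k)) ≤ a.natAbs := by
  rw [← zsmul_eq_mul]
  refine edist_add_zsmul_le (fun x => ?_) x a
  simp [SimpleGraph.edist_le_one_iff_adj_or_eq, GP, GPRel, or_iff_not_imp_right]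

theorem edist_spoke (k : ℕ) (x : ZMod n) : (GP n k).edist (Sum.inl x) (Sum.inr x) = 1 := by
  simp [SimpleGraph.edist_eq_one_iff_adj, GP, GPRel]

theorem edist_inr_inl_le (k : ℕ) (x : ZMod n) (p : ℤ × ℤ) :
    (GP n k).edist (Sum.inr x) (Sum.inl (x + disp n k p)) ≤ l1Norm p + 1 := by
  rw [disp_apply, ← add_assoc]
  calc (GP n k).edist (Sum.inr x) (Sum.inl (x + p.1 * k + p.2))
      ≤ (GP n k).edist (Sum.inr x) (Sum.inr (x + p.1 * k))
        + (GP n k).edist (Sum.inr (x + p.1 * k)) (Sum.inl (x + p.1 * k))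
        + (GP n k).edist (Sum.inl (x + p.1 * k)) (Sum.inl (x + p.1 * k + p.2)) :=
      SimpleGraph.edist_triangle.trans (add_le_add_left SimpleGraph.edist_triangle _)
    _ ≤ p.1.natAbs + 1 + p.2.natAbs := by
      gcongr
      · exact edist_inner_le k x p.1
      · rw [SimpleGraph.edist_comm, edist_spoke]
      · exact edist_outer_le k _ p.2
    _ = l1Norm p + 1 := by rw [l1Norm]; push_cast; ring

theorem edist_le_cost {u w : GPVertex n} {p : ℤ × ℤ} (hp : IsDisp k u w p) :
    (GP n k).edist u w ≤ cost u w p := by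
  rcases u with x | x <;> rcases w with y | y <;> rw [IsDisp] at hp <;>
    simp only [Sum.elim_inl, Sum.elim_inr, id_eq] at hp <;> subst hp <;> simp only [cost]
  · split_ifs with h
    · simpa [h] using edist_outer_le k x p.2
    · calc (GP n k).edist (Sum.inl x) (Sum.inl (x + disp n k p))
          ≤ (GP n k).edist (Sum.inl x) (Sum.inr x)
            + (GP n k).edist (Sum.inr x) (Sum.inl (x + disp n k p)) := SimpleGraph.edist_triangle
        _ ≤ 1 + (l1Norm p + 1 : ℕ∞) := add_le_add (edist_spoke k x).le (edist_inr_inl_le k x p)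
        _ = ((l1Norm p + 2 : ℕ) : ℕ∞) := by push_cast; ring
  · rw [SimpleGraph.edist_comm]
    simpa only [l1Norm, Prod.fst_neg, Prod.snd_neg, Int.natAbs_neg, map_neg, add_neg_cancel_right,
      Nat.cast_add, Nat.cast_one] using edist_inr_inl_le k (x + disp n k p) (-p)
  · simpa using edist_inr_inl_le k x p
  · split_ifs with h
    · simpa [h] using edist_inner_le k x p.1
    · calc (GP n k).edist (Sum.inr x) (Sum.inr (x + disp n k p))
          ≤ (GP n k).edist (Sum.inr x) (Sum.inl (x + disp n k p))
            + (GP n k).edist (Sum.inl (x + disp n k p)) (Sum.inr (x + disp n k p)) :=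
          SimpleGraph.edist_triangle
        _ ≤ (l1Norm p + 1 : ℕ∞) + 1 :=
          add_le_add (edist_inr_inl_le k x p) (edist_spoke k _).le
        _ = ((l1Norm p + 2 : ℕ) : ℕ∞) := by push_cast; ring

theorem dist_le_cost {u w : GPVertex n} {p : ℤ × ℤ} (hp : IsDisp k u w p) :
    (GP n k).dist u w ≤ cost u w p :=
  ENat.toNat_le_of_le_natCast (edist_le_cost hp)

theorem exists_isDisp_cost_eq_dist (k : ℕ) (u w : GPVertex n) :
    ∃ p, IsDisp k u w p ∧ cost u w p = (GP n k).dist u w := by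
  have hreach : (GP n k).Reachable u w := by
    obtain ⟨p, hp⟩ := exists_isDisp k u w
    exact SimpleGraph.reachable_of_edist_ne_top (ne_top_of_le_ne_top (by simp) (edist_le_cost hp))
  obtain ⟨q, hq⟩ := hreach.exists_walk_length_eq_dist
  obtain ⟨p, hp, hpq⟩ := exists_isDisp_cost_le_length q
  exact ⟨p, hp, le_antisymm (hq ▸ hpq) (dist_le_cost hp)⟩

/-! ### Vertices reached by a unique shortest displacement -/

/-- `p` is the only displacement from `u` to `w` of cost at most `cost u w p`. -/
def IsUniqueShortest (k : ℕ) (u w : GPVertex n) (p : ℤ × ℤ) : Prop :=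
  IsDisp k u w p ∧ ∀ q, IsDisp k u w q → cost u w q ≤ cost u w p → q = p

theorem IsUniqueShortest.dist_eq {u w : GPVertex n} {p : ℤ × ℤ} (h : IsUniqueShortest k u w p) :
    (GP n k).dist u w = cost u w p := by
  obtain ⟨q, hq, hqd⟩ := exists_isDisp_cost_eq_dist k u w
  rw [← hqd, h.2 q hq (hqd.trans_le (dist_le_cost h.1))]

theorem IsUniqueShortest.add_dist_eq_iff {u v w : GPVertex n} {p s : ℤ × ℤ}
    (h : IsUniqueShortest k u w p) (hs : IsDisp k u v s) :
    cost u v s + (GP n k).dist v w = cost u w p ↔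
      cost u v s + cost v w (p - s) = cost u w p := by
  constructor
  · intro hd
    obtain ⟨q, hq, hqd⟩ := exists_isDisp_cost_eq_dist k v w
    have hsq : s + q = p := h.2 _ (hs.add hq) ((cost_add_le u v w s q).trans (by omega))
    rwa [← hsq, add_sub_cancel_left, hqd, hsq]
  · intro hc
    obtain ⟨q, hq, hqd⟩ := exists_isDisp_cost_eq_dist k v w
    have hdist_le := dist_le_cost (h.1.sub hs)
    have hdist_ge := dist_le_cost (hs.add hq)
    have htriangle := cost_add_le u v w s q
    rw [h.dist_eq] at hdist_ge
    omega

/-- The neighbours of `u` that lie on a geodesic from `u` to `w`. -/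
def geodesicNeighbors (k : ℕ) (u w : GPVertex n) : Set (GPVertex n) :=
  {v | (GP n k).Adj u v ∧ 1 + (GP n k).dist v w = (GP n k).dist u w}

theorem adj_inr_iff (hk : (k : ZMod n) ≠ 0) {j : ZMod n} {v : GPVertex n} :
    (GP n k).Adj (Sum.inr j) v ↔
      v = Sum.inl j ∨ v = Sum.inr (j + k) ∨ v = Sum.inr (j - k) := by
  rcases v with y | y
  · simp [GP, GPRel, eq_comm]
  · simp only [GP, SimpleGraph.fromRel_adj, GPRel, ne_eq, Sum.inr.injEq, reduceCtorEq, false_or,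
      eq_sub_iff_add_eq]
    grind

theorem IsUniqueShortest.mem_geodesicNeighbors_iff {j : ZMod n} {w : GPVertex n} {p : ℤ × ℤ}
    (h : IsUniqueShortest k (Sum.inr j) w p) (hk : (k : ZMod n) ≠ 0) {v : GPVertex n} :
    v ∈ geodesicNeighbors k (Sum.inr j) w ↔
      (v = Sum.inl j ∧ 1 + cost v w p = cost (Sum.inr j) w p) ∨
      (v = Sum.inr (j + k) ∧ 1 + cost v w (p - (1, 0)) = cost (Sum.inr j) w p) ∨
      (v = Sum.inr (j - k) ∧ 1 + cost v w (p - (-1, 0)) = cost (Sum.inr j) w p) := by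
  have hspoke := h.add_dist_eq_iff (v := Sum.inl j) (s := 0) (by simp [IsDisp])
  have hforward := h.add_dist_eq_iff (v := Sum.inr (j + (k : ZMod n))) (s := (1, 0))
    (by simp [IsDisp])
  have hbackward := h.add_dist_eq_iff (v := Sum.inr (j - (k : ZMod n))) (s := (-1, 0))
    (by simp [IsDisp, sub_eq_add_neg])
  rw [sub_zero] at hspoke
  rw [geodesicNeighbors, Set.mem_ofPred_eq, h.dist_eq, adj_inr_iff hk]
  constructor
  · rintro ⟨rfl | rfl | rfl, hd⟩
    · exact .inl ⟨rfl, hspoke.1 hd⟩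
    · exact .inr (.inl ⟨rfl, hforward.1 hd⟩)
    · exact .inr (.inr ⟨rfl, hbackward.1 hd⟩)
  · rintro (⟨rfl, hc⟩ | ⟨rfl, hc⟩ | ⟨rfl, hc⟩)
    · exact ⟨.inl rfl, hspoke.2 hc⟩
    · exact ⟨.inr (.inl rfl), hforward.2 hc⟩
    · exact ⟨.inr (.inr rfl), hbackward.2 hc⟩

/-- The neighbour of `b_j` one step in the direction of the sign of `a` along the inner rim, and
`a_j` if `a = 0`. -/
def radialNeighbor (k : ℕ) (j : ZMod n) (a : ℤ) : GPVertex n :=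
  if a = 0 then Sum.inl j else if 0 < a then Sum.inr (j + k) else Sum.inr (j - k)

theorem inl_ne_radialNeighbor {j x : ZMod n} {a : ℤ} (ha : a ≠ 0) :
    Sum.inl x ≠ radialNeighbor k j a := by
  grind [radialNeighbor]

theorem IsUniqueShortest.geodesicNeighbors_inl {j y : ZMod n} {p : ℤ × ℤ}
    (h : IsUniqueShortest k (Sum.inr j) (Sum.inl y) p) (hk : (k : ZMod n) ≠ 0) :
    geodesicNeighbors k (Sum.inr j) (Sum.inl y) = {radialNeighbor k j p.1} := by
  ext v
  rw [h.mem_geodesicNeighbors_iff hk, Set.mem_singleton_iff, radialNeighbor]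
  rcases v with x | x <;> simp only [cost, l1Norm, Prod.fst_sub, Prod.snd_sub] <;> grind

theorem IsUniqueShortest.geodesicNeighbors_inr {j y : ZMod n} {p : ℤ × ℤ}
    (h : IsUniqueShortest k (Sum.inr j) (Sum.inr y) p) (hk : (k : ZMod n) ≠ 0) (hp : p.2 ≠ 0) :
    geodesicNeighbors k (Sum.inr j) (Sum.inr y) = {Sum.inl j, radialNeighbor k j p.1} := by
  ext v
  rw [h.mem_geodesicNeighbors_iff hk, Set.mem_insert_iff, Set.mem_singleton_iff, radialNeighbor]
  rcases v with x | x <;> simp only [cost, l1Norm, Prod.fst_sub, Prod.snd_sub] <;> grind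

/-! ### Parameters without short relations -/

/-- Every nonzero relation `a * k + b = 0` in `ℤ/nℤ` satisfies `|a| + |b| ≥ L`. -/
def NoRelationBelow (n k L : ℕ) : Prop :=
  ∀ p, disp n k p = 0 → l1Norm p < L → p = 0

theorem NoRelationBelow.eq_of_disp_eq {L : ℕ} (h : NoRelationBelow n k L) {p q : ℤ × ℤ}
    (hpq : disp n k p = disp n k q) (hL : l1Norm p + l1Norm q < L) : p = q := by
  refine sub_eq_zero.1 (h (p - q) (by rw [map_sub, hpq, sub_self]) ?_)
  simp only [l1Norm, Prod.fst_sub, Prod.snd_sub] at *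
  omega

theorem NoRelationBelow.natCast_ne_zero {L : ℕ} (h : NoRelationBelow n k L) (hL : 1 < L) :
    (k : ZMod n) ≠ 0 := fun hk => by
  simpa using h (1, 0) (by simp [hk]) hL

theorem NoRelationBelow.isUniqueShortest_inl {L : ℕ} (h : NoRelationBelow n k L) (j : ZMod n)
    {p : ℤ × ℤ} (hp : 2 * l1Norm p < L) :
    IsUniqueShortest k (Sum.inr j) (Sum.inl (j + disp n k p)) p := by
  refine ⟨rfl, fun q hq hcost => h.eq_of_disp_eq (add_left_cancel hq.symm) ?_⟩
  simp only [cost] at hcost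
  omega

theorem NoRelationBelow.isUniqueShortest_inr {L : ℕ} (h : NoRelationBelow n k L) (j : ZMod n)
    {p : ℤ × ℤ} (hp : 2 * l1Norm p + 2 < L) (hp2 : p.2 ≠ 0) :
    IsUniqueShortest k (Sum.inr j) (Sum.inr (j + disp n k p)) p := by
  refine ⟨rfl, fun q hq hcost => h.eq_of_disp_eq (add_left_cancel hq.symm) ?_⟩
  have hcost_p : cost (Sum.inr j) (Sum.inr (j + disp n k p)) p = l1Norm p + 2 := if_neg hp2
  have hq_le := l1Norm_le_cost (Sum.inr j) (Sum.inr (j + disp n k p)) q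
  omega

/-- The sphere of radius `r` in `ℤ × ℤ` for the `ℓ¹` norm. -/
noncomputable def l1Sphere (r : ℕ) : Finset (ℤ × ℤ) :=
  {p ∈ Finset.Icc (-r) r | l1Norm p = r}

theorem mem_l1Sphere {r : ℕ} {p : ℤ × ℤ} : p ∈ l1Sphere r ↔ l1Norm p = r := by
  rw [l1Sphere, Finset.mem_filter, Finset.mem_Icc, and_iff_right_iff_imp]
  rintro rfl
  simp only [l1Norm, Prod.le_def, Prod.fst_neg, Prod.snd_neg, Prod.fst_natCast, Prod.snd_natCast]
  omega

theorem exists_natAbs_sub_mul_lt {r : ℕ} {a : ℤ} (ha : a.natAbs = r + 2) :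
    ∃ t : ℤ, (a - t * (2 * r + 3 : ℕ)).natAbs < a.natAbs := by
  rcases le_total 0 a with h | h
  · exact ⟨1, by omega⟩
  · exact ⟨-1, by omega⟩

/-- The relation `(2 * r + 3) * k = 0` folds `b_{j + (r + 2) k}` back to `b_{j - (r + 1) k}`. -/
theorem dist_inr_inr_ne {r : ℕ} (hfold : ((2 * r + 3 : ℕ) : ZMod n) * k = 0) (j : ZMod n)
    {a : ℤ} (ha : a.natAbs = r + 2) :
    (GP n k).dist (Sum.inr j) (Sum.inr (j + a * k)) ≠ r + 2 := by
  obtain ⟨t, ht⟩ := exists_natAbs_sub_mul_lt ha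
  have hdisp : IsDisp k (Sum.inr j) (Sum.inr (j + a * k)) (a - t * (2 * r + 3 : ℕ), 0) := by
    simp only [IsDisp, Sum.elim_inr, id_eq, disp_apply, Int.cast_sub, Int.cast_mul,
      Int.cast_natCast, Int.cast_zero, add_zero, sub_mul, mul_assoc, hfold, mul_zero, sub_zero]
  have hle : (GP n k).dist _ _ ≤ (a - t * (2 * r + 3 : ℕ)).natAbs := dist_le_cost hdisp
  omega

theorem NoRelationBelow.dist_inr_eq_iff {r : ℕ} (h : NoRelationBelow n k (2 * r + 3))
    (hfold : ((2 * r + 3 : ℕ) : ZMod n) * k = 0) {j : ZMod n} {w : GPVertex n} :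
    (GP n k).dist (Sum.inr j) w = r + 2 ↔
      (∃ p ∈ l1Sphere (r + 1), w = Sum.inl (j + disp n k p)) ∨
      (∃ p ∈ l1Sphere r, p.2 ≠ 0 ∧ w = Sum.inr (j + disp n k p)) := by
  simp only [mem_l1Sphere]
  constructor
  · intro hd
    obtain ⟨p, hp, hcost⟩ := exists_isDisp_cost_eq_dist k (Sum.inr j) w
    rw [hd] at hcost
    rcases w with y | y <;> obtain rfl : y = j + disp n k p := hp
    · exact .inl ⟨p, by simpa [cost] using hcost, rfl⟩
    · by_cases hp2 : p.2 = 0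
      · simp only [cost, if_pos hp2] at hcost
        simp only [disp_apply, hp2, Int.cast_zero, add_zero] at hd
        exact absurd hd (dist_inr_inr_ne hfold j hcost)
      · exact .inr ⟨p, by simpa [cost, hp2] using hcost, hp2, rfl⟩
  · rintro (⟨p, hp, rfl⟩ | ⟨p, hp, hp2, rfl⟩)
    · rw [(h.isUniqueShortest_inl j (by omega)).dist_eq]
      simp only [cost, hp]
    · rw [(h.isUniqueShortest_inr j (by omega) hp2).dist_eq]
      simp only [cost, if_neg hp2, hp]

theorem NoRelationBelow.ncard_dist_inr_eq {r : ℕ} (h : NoRelationBelow n k (2 * r + 3))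
    (hfold : ((2 * r + 3 : ℕ) : ZMod n) * k = 0) (j : ZMod n) :
    {w | (GP n k).dist (Sum.inr j) w = r + 2}.ncard =
      (l1Sphere (r + 1)).card + {p ∈ l1Sphere r | p.2 ≠ 0}.card := by
  let vertexAt : (ℤ × ℤ) ⊕ (ℤ × ℤ) → GPVertex n := Sum.map (j + disp n k ·) (j + disp n k ·)
  let shell := (l1Sphere (r + 1)).disjSum {p ∈ l1Sphere r | p.2 ≠ 0}
  have hsphere : {w | (GP n k).dist (Sum.inr j) w = r + 2} = vertexAt '' shell := by
    ext w
    simp [h.dist_inr_eq_iff hfold, vertexAt, shell, eq_comm, and_assoc]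
  have hinj : Set.InjOn vertexAt shell := by
    rintro (p | p) hp (q | q) hq hpq <;>
      simp only [vertexAt, Sum.map_inl, Sum.map_inr, Sum.inl.injEq, Sum.inr.injEq, reduceCtorEq,
        add_right_inj] at hpq <;>
      simp only [shell, Finset.mem_coe, Finset.inl_mem_disjSum, Finset.inr_mem_disjSum,
        Finset.mem_filter, mem_l1Sphere] at hp hq <;>
      exact congrArg _ (h.eq_of_disp_eq hpq (by omega))
  rw [hsphere, hinj.ncard_image, Set.ncard_coe_finset, Finset.card_disjSum]

theorem mem_innerDoubled_iff {j : ZMod n} {w : GPVertex n} :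
    w ∈ innerDoubled n k j ↔
      ∃ p ∈ l1Sphere 2, p.1 ≠ 0 ∧ p.2 ≠ 0 ∧ w = Sum.inr (j + disp n k p) := by
  have hcorners (p : ℤ × ℤ) : (p ∈ l1Sphere 2 ∧ p.1 ≠ 0) ∧ p.2 ≠ 0 ↔
      p = (-1, -1) ∨ p = (-1, 1) ∨ p = (1, -1) ∨ p = (1, 1) := by
    simp only [mem_l1Sphere, l1Norm, Prod.ext_iff]
    omega
  simp [← and_assoc, hcorners, innerDoubled, or_and_right, exists_or, sub_eq_add_neg, add_assoc]

theorem NoRelationBelow.inr_mem_innerDoubled_iff {L : ℕ} (h : NoRelationBelow n k L) (hL : 4 < L)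
    {j : ZMod n} {p : ℤ × ℤ} (hp : p ∈ l1Sphere 2) (hp2 : p.2 ≠ 0) :
    Sum.inr (j + disp n k p) ∈ innerDoubled n k j ↔ p.1 ≠ 0 := by
  rw [mem_innerDoubled_iff]
  refine ⟨?_, fun hp1 => ⟨p, hp, hp1, hp2, rfl⟩⟩
  rintro ⟨q, hq, hq1, -, hpq⟩
  rw [mem_l1Sphere] at hp hq
  rwa [h.eq_of_disp_eq (add_left_cancel (Sum.inr_injective hpq)) (by omega)]

theorem disp_eq_zero_iff {p : ℤ × ℤ} : disp n k p = 0 ↔ (n : ℤ) ∣ p.1 * k + p.2 := by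
  rw [← ZMod.intCast_zmod_eq_zero_iff_dvd, disp_apply]
  push_cast
  rfl

/-- Modulo `7 * m`, the relation `a * (i * m) + b = 0` forces `b = m * c` and `7 ∣ a * i + c`;
a vector with `|a| + |b| < 7` leaves only `c ∈ {-1, 0, 1}`. -/
theorem noRelationBelow_seven {i m : ℕ}
    (him : i = 1 ∧ 6 ≤ m ∨ i = 2 ∧ 4 ≤ m ∨ i = 3 ∧ 5 ≤ m) :
    NoRelationBelow (7 * m) (i * m) 7 := by
  rintro ⟨a, b⟩ hab hnorm
  simp only [l1Norm] at hnorm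
  rw [disp_eq_zero_iff] at hab
  push_cast at hab
  obtain ⟨c, rfl⟩ : (m : ℤ) ∣ b := by
    rw [← Int.dvd_add_right (Dvd.intro_left (a * i) (mul_assoc a i m))]
    exact (Dvd.intro_left 7 rfl).trans hab
  have hac : 7 ∣ a * i + c := by
    rw [show a * (i * m) + m * c = (a * i + c) * m by ring] at hab
    exact (mul_dvd_mul_iff_right (by omega : (m : ℤ) ≠ 0)).1 hab
  have hc : c.natAbs < 2 := by
    rw [Int.natAbs_mul, Int.natAbs_natCast] at hnorm
    by_contra! hc
    have := Nat.mul_le_mul (show 4 ≤ m by omega) hc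
    omega
  obtain rfl | rfl | rfl : c = -1 ∨ c = 0 ∨ c = 1 := by omega
  all_goals
    rcases him with ⟨rfl, hm⟩ | ⟨rfl, hm⟩ | ⟨rfl, hm⟩ <;>
      simp only [Prod.mk_eq_zero] <;> omega

theorem noRelationBelow_seven_of_mul_eq (hi : ∃ i, i ∈ ({1, 2, 3} : Set ℕ) ∧ i * n = 7 * k)
    (hbig : 42 ≤ n ∨ (n = 28 ∧ k = 8) ∨ (n = 35 ∧ k = 10) ∨ (n = 35 ∧ k = 15)) :
    NoRelationBelow n k 7 := by
  obtain ⟨i, hi, hik⟩ := hi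
  obtain ⟨m, rfl, rfl, him⟩ : ∃ m, n = 7 * m ∧ k = i * m ∧
      (i = 1 ∧ 6 ≤ m ∨ i = 2 ∧ 4 ≤ m ∨ i = 3 ∧ 5 ≤ m) := by
    refine ⟨n / 7, ?_⟩
    rcases hi with rfl | rfl | rfl <;> omega
  exact noRelationBelow_seven him

end GP

/-- For every inner vertex `b_j`, there are exactly `18` vertices at distance exactly
`4`; the vertices `b_{j-k-1}, b_{j-k+1}, b_{j+k-1}, b_{j+k+1}` are exactly the ones
reached by shortest paths of length `4` through two distinct neighbours of `b_j`, and
every other vertex at distance `4` is reached through a unique neighbour of `b_j`. -/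
theorem GP_inner_distance_four (n k : ℕ)
    (hn : 0 < n) (hk : 0 < k)
    (hi : ∃ i, i ∈ ({1, 2, 3} : Set ℕ) ∧ i * n = 7 * k)
    (h2k : 2 * k < n)
    (hbig : 42 ≤ n ∨ (n = 28 ∧ k = 8) ∨ (n = 35 ∧ k = 10) ∨ (n = 35 ∧ k = 15)) :
    ∀ j : ZMod n,
      {w : GPVertex n | (GP n k).dist (Sum.inr j) w = 4}.ncard = 18 ∧
      (∀ w ∈ innerDoubled n k j, (GP n k).dist (Sum.inr j) w = 4) ∧
      ∀ w : GPVertex n, (GP n k).dist (Sum.inr j) w = 4 →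
        ((w ∈ innerDoubled n k j ∧
            {v : GPVertex n | (GP n k).Adj (Sum.inr j) v ∧
              (GP n k).dist v w = 3}.ncard = 2) ∨
         (w ∉ innerDoubled n k j ∧
            {v : GPVertex n | (GP n k).Adj (Sum.inr j) v ∧
              (GP n k).dist v w = 3}.ncard = 1)) := by
  intro j
  have hrel := GP.noRelationBelow_seven_of_mul_eq hi hbig
  have hk0 := hrel.natCast_ne_zero (by norm_num)
  have hfold : ((2 * 2 + 3 : ℕ) : ZMod n) * k = 0 := by
    obtain ⟨i, -, hik⟩ := hi
    exact_mod_cast (ZMod.natCast_eq_zero_iff _ n).2 (Dvd.intro_left i hik)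
  have hsphere {w} := hrel.dist_inr_eq_iff (r := 2) hfold (j := j) (w := w)
  refine ⟨(hrel.ncard_dist_inr_eq (r := 2) hfold j).trans (by decide),
    fun w hw => ?_, fun w hw => ?_⟩
  · obtain ⟨p, hp, -, hp2, rfl⟩ := GP.mem_innerDoubled_iff.1 hw
    exact hsphere.2 (.inr ⟨p, hp, hp2, rfl⟩)
  · have hgeodesic : {v | (GP n k).Adj (Sum.inr j) v ∧ (GP n k).dist v w = 3} =
        GP.geodesicNeighbors k (Sum.inr j) w := by
      rw [GP.geodesicNeighbors, hw]
      exact Set.ext fun v => and_congr_right fun _ => by omega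
    rw [hgeodesic]
    obtain ⟨p, hp, rfl⟩ | ⟨p, hp, hp2, rfl⟩ := hsphere.1 hw
    · have hU := hrel.isUniqueShortest_inl j (p := p) (by rw [GP.mem_l1Sphere.1 hp]; norm_num)
      rw [hU.geodesicNeighbors_inl hk0]
      exact .inr ⟨by simp [innerDoubled], Set.ncard_singleton _⟩
    · have hU := hrel.isUniqueShortest_inr j (p := p) (by rw [GP.mem_l1Sphere.1 hp]; norm_num) hp2
      rw [hU.geodesicNeighbors_inr hk0 hp2, hrel.inr_mem_innerDoubled_iff (by norm_num) hp hp2]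
      by_cases hp1 : p.1 = 0
      · exact .inr (by simp [GP.radialNeighbor, hp1])
      · exact .inl ⟨hp1, Set.ncard_pair (GP.inl_ne_radialNeighbor hp1)⟩
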